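/- arXiv:2408.02853 — 3 statements merged into one kernel-verified Lean document; each statement's English description precedes it below -/
import Mathlib

section
/- Let (Ω, F, P) be a probability space, θ > 0, and let X be a real random variable with exp(-θX) integrable with respect to P. Let Q be a probability measure on (Ω, F) absolutely continuous with respect to P such that X is Q-integrable and the relative entropy H(Q|P) is finite. Then E_Q[−X] − (1/θ)·H(Q|P) ≤ (1/θ)·log E_P[exp(-θX)]. -/
open MeasureTheory Real

/-- Weak duality for the entropic risk measure: for any probability measure `Q ≪ P`
with `X` `Q`-integrable and finite relative entropy
`H(Q|P) = E_P[(dQ/dP) log (dQ/dP)]`, one has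
`E_Q[-X] - (1/θ) H(Q|P) ≤ (1/θ) log E_P[exp (-θ X)]`. -/
theorem entropic_weak_duality
    {Ω : Type*} [MeasurableSpace Ω] (P : Measure Ω) [IsProbabilityMeasure P]
    (θ : ℝ) (hθ : 0 < θ) (X : Ω → ℝ) (hXm : Measurable X)
    (hX : Integrable (fun ω => Real.exp (-θ * X ω)) P)
    (Q : Measure Ω) [IsProbabilityMeasure Q] (hQP : Q ≪ P)
    (hXQ : Integrable X Q)
    (hH : Integrable
      (fun ω => (Q.rnDeriv P ω).toReal * Real.log (Q.rnDeriv P ω).toReal) P) :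
    (∫ ω, -X ω ∂Q)
      - (1 / θ) * ∫ ω, (Q.rnDeriv P ω).toReal * Real.log (Q.rnDeriv P ω).toReal ∂P
      ≤ (1 / θ) * Real.log (∫ ω, Real.exp (-θ * X ω) ∂P) := by
  have hllr : Integrable (llr Q P) Q := (integrable_rnDeriv_smul_iff hQP).mp hH
  have hent : ∫ ω, (Q.rnDeriv P ω).toReal * Real.log (Q.rnDeriv P ω).toReal ∂P
      = ∫ ω, llr Q P ω ∂Q := integral_rnDeriv_smul hQP
  have hθX : Integrable (fun ω => -θ * X ω) Q := hXQ.const_mul (-θ)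
  have := isProbabilityMeasure_tilted hX
  have gibbs := InformationTheory.integral_llr_add_sub_measure_univ_nonneg
    (hQP.trans (absolutelyContinuous_tilted hX))
    (integrable_llr_tilted_right hQP hθX hllr hX)
  rw [integral_llr_tilted_right hQP hθX hX hllr, integral_const_mul] at gibbs
  simp only [probReal_univ] at gibbs
  rw [hent, integral_neg, ← sub_nonneg]
  have key : 0 ≤ (1 / θ) * (∫ ω, llr Q P ω ∂Q - -θ * ∫ ω, X ω ∂Q
      + Real.log (∫ ω, Real.exp (-θ * X ω) ∂P)) :=
    mul_nonneg (by positivity) (by linarith)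
  convert key using 1
  field_simp
  ring
end

section
/- Let (Ω, F, P) be a probability space, θ > 0, and let X be a real random variable such that exp(-θX) and X·exp(-θX) are P-integrable. Define the probability measure Q by dQ/dP = exp(-θX) / E_P[exp(-θX)]. Then Q ≪ P, H(Q|P) is finite, and E_Q[−X] − (1/θ)·H(Q|P) = (1/θ)·log E_P[exp(-θX)], i.e. Q attains the supremum in the dual representation of the entropic risk measure. -/
open MeasureTheory Real

/-- The optimal measure in the dual representation of the entropic risk measure:
with density `dQ/dP = exp (-θ X) / E_P[exp (-θ X)]`, the measure `Q` is a probability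
measure absolutely continuous w.r.t. `P`, its relative entropy
`H(Q|P) = E_P[(dQ/dP) log (dQ/dP)]` is finite, and
`E_Q[-X] - (1/θ) H(Q|P) = (1/θ) log E_P[exp (-θ X)]`, i.e. `Q` attains the supremum
in the dual representation. -/
theorem entropic_dual_attained
    {Ω : Type*} [MeasurableSpace Ω] (P : Measure Ω) [IsProbabilityMeasure P]
    (θ : ℝ) (hθ : 0 < θ) (X : Ω → ℝ) (hXm : Measurable X)
    (hX : Integrable (fun ω => Real.exp (-θ * X ω)) P)
    (hXe : Integrable (fun ω => X ω * Real.exp (-θ * X ω)) P)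
    (g : Ω → ℝ)
    (hg : g = fun ω => Real.exp (-θ * X ω) / ∫ ω', Real.exp (-θ * X ω') ∂P)
    (Q : Measure Ω) (hQ : Q = P.withDensity (fun ω => ENNReal.ofReal (g ω))) :
    IsProbabilityMeasure Q ∧ Q ≪ P ∧
    Integrable (fun ω => g ω * Real.log (g ω)) P ∧
    (∫ ω, -X ω ∂Q) - (1 / θ) * ∫ ω, g ω * Real.log (g ω) ∂P
      = (1 / θ) * Real.log (∫ ω, Real.exp (-θ * X ω) ∂P) := by
  have hZ : 0 < ∫ ω, Real.exp (-θ * X ω) ∂P := integral_exp_pos hX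
  have hQ_tilted : Q = P.tilted (fun ω => -θ * X ω) := by rw [hQ, hg, Measure.tilted]
  have hQ_integral : ∫ ω, -X ω ∂Q
      = -(∫ ω, X ω * Real.exp (-θ * X ω) ∂P) / ∫ ω, Real.exp (-θ * X ω) ∂P := by
    rw [hQ_tilted, integral_tilted, ← integral_neg, ← integral_div]
    refine integral_congr_ae (ae_of_all _ fun ω => ?_)
    simp only [smul_eq_mul]
    ring
  set Z := ∫ ω, Real.exp (-θ * X ω) ∂P with hZ_def
  have h_entropy : (fun ω => g ω * Real.log (g ω)) = fun ω =>
      -θ / Z * (X ω * Real.exp (-θ * X ω)) - Real.log Z / Z * Real.exp (-θ * X ω) := by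
    funext ω
    simp only [hg]
    rw [Real.log_div (Real.exp_ne_zero _) hZ.ne', Real.log_exp]
    ring
  refine ⟨hQ_tilted ▸ isProbabilityMeasure_tilted hX,
    hQ_tilted ▸ tilted_absolutelyContinuous P _, ?_, ?_⟩
  · rw [h_entropy]
    exact (hXe.const_mul _).sub (hX.const_mul _)
  · rw [h_entropy, integral_sub (hXe.const_mul _) (hX.const_mul _), integral_const_mul,
      integral_const_mul, ← hZ_def, hQ_integral]
    field_simp
    ring_nf
end

section
/- Let (Ω, F, P) be a probability space, θ > 0, and let X be a real random variable such that exp(-θX) is integrable. Then (1/θ)·log E[exp(-θX)] = sup over all probability measures Q ≪ P with X Q-integrable and H(Q|P) < ∞ of { E_Q[−X] − (1/θ)·H(Q|P) }, provided X·exp(-θX) is also P-integrable (so that the supremum is attained). -/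
open MeasureTheory Real

namespace MeasureTheory

variable {Ω : Type*} [MeasurableSpace Ω] {P Q : Measure Ω} [IsProbabilityMeasure P]
  [IsProbabilityMeasure Q] {f : Ω → ℝ}

/-- The Gibbs (Donsker–Varadhan) inequality. -/
theorem integral_sub_integral_llr_le_log_integral_exp (hQP : Q ≪ P) (hfQ : Integrable f Q)
    (hfP : Integrable (fun ω => exp (f ω)) P) (h_int : Integrable (llr Q P) Q) :
    ∫ ω, f ω ∂Q - ∫ ω, llr Q P ω ∂Q ≤ log (∫ ω, exp (f ω) ∂P) := by
  have := isProbabilityMeasure_tilted hfP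
  have hnonneg := InformationTheory.integral_llr_add_sub_measure_univ_nonneg
    (hQP.trans (absolutelyContinuous_tilted hfP))
    (integrable_llr_tilted_right hQP hfQ h_int hfP)
  rw [integral_llr_tilted_right hQP hfQ hfP h_int] at hnonneg
  simp only [probReal_univ] at hnonneg
  linarith

theorem llr_tilted_self (hfP : Integrable (fun ω => exp (f ω)) P) :
    llr (P.tilted f) P =ᵐ[P.tilted f] fun ω => f ω - log (∫ ω, exp (f ω) ∂P) :=
  (tilted_absolutelyContinuous P f).ae_le (log_rnDeriv_tilted_left_self hfP)

end MeasureTheory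

/-- Dual representation of the static entropic risk measure: provided `X exp (-θ X)`
is `P`-integrable, `(1/θ) log E_P[exp (-θ X)]` is the greatest element (an attained
supremum) of the set of values `E_Q[-X] - (1/θ) H(Q|P)` over all probability measures
`Q ≪ P` with `X` `Q`-integrable and finite relative entropy
`H(Q|P) = E_P[(dQ/dP) log (dQ/dP)]`. -/
theorem entropic_dual_representation
    {Ω : Type*} [MeasurableSpace Ω] (P : Measure Ω) [IsProbabilityMeasure P]
    (θ : ℝ) (hθ : 0 < θ) (X : Ω → ℝ) (hXm : Measurable X)
    (hX : Integrable (fun ω => Real.exp (-θ * X ω)) P)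
    (hXe : Integrable (fun ω => X ω * Real.exp (-θ * X ω)) P) :
    IsGreatest
      {v : ℝ | ∃ Q : Measure Ω, IsProbabilityMeasure Q ∧ Q ≪ P ∧
        Integrable X Q ∧
        Integrable
          (fun ω => (Q.rnDeriv P ω).toReal * Real.log (Q.rnDeriv P ω).toReal) P ∧
        v = (∫ ω, -X ω ∂Q)
            - (1 / θ) *
              ∫ ω, (Q.rnDeriv P ω).toReal * Real.log (Q.rnDeriv P ω).toReal ∂P}
      ((1 / θ) * Real.log (∫ ω, Real.exp (-θ * X ω) ∂P)) := by
  have hmul (Q : Measure Ω) : ∫ ω, -θ * X ω ∂Q = θ * ∫ ω, -X ω ∂Q := by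
    rw [integral_const_mul, integral_neg]
    ring
  constructor
  · have := isProbabilityMeasure_tilted hX
    have hQP := tilted_absolutelyContinuous P (fun ω => -θ * X ω)
    have hXQ : Integrable X (P.tilted fun ω => -θ * X ω) := by
      rw [integrable_tilted_iff hX]
      simpa only [smul_eq_mul, mul_comm] using hXe
    have hfQ := hXQ.const_mul (-θ)
    refine ⟨P.tilted fun ω => -θ * X ω, this, hQP, hXQ, ?_, ?_⟩
    · rw [integrable_rnDeriv_mul_log_iff hQP, integrable_congr (llr_tilted_self hX)]
      exact hfQ.sub (integrable_const _)
    · rw [integral_rnDeriv_mul_log hQP, integral_congr_ae (llr_tilted_self hX),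
        integral_sub hfQ (integrable_const _), hmul, integral_const, probReal_univ, one_smul]
      field_simp
      ring
  · rintro v ⟨Q, hQ, hQP, hXQ, hent, rfl⟩
    rw [integrable_rnDeriv_mul_log_iff hQP] at hent
    have hle := integral_sub_integral_llr_le_log_integral_exp hQP (hXQ.const_mul (-θ)) hX hent
    rw [hmul] at hle
    rw [integral_rnDeriv_mul_log hQP]
    calc (∫ ω, -X ω ∂Q) - 1 / θ * ∫ ω, llr Q P ω ∂Q
        = 1 / θ * (θ * (∫ ω, -X ω ∂Q) - ∫ ω, llr Q P ω ∂Q) := by field_simp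
      _ ≤ 1 / θ * log (∫ ω, exp (-θ * X ω) ∂P) := by gcongr
end
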